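/- Let g ≥ 2 and let ℓ ≥ 3 be a prime. Let H ⊆ GSp_{2g}(ℤ/ℓℤ) be a subgroup such that: (A) H contains a transvection, i.e., a nonidentity element of determinant 1 that fixes pointwise some codimension-1 subspace of (ℤ/ℓℤ)^{2g}; (B) the action of H on (ℤ/ℓℤ)^{2g} is irreducible, i.e., there is no H-invariant subspace other than 0 and the whole space; and (C) the action of H on (ℤ/ℓℤ)^{2g} is primitive, i.e., there is no direct-sum decomposition (ℤ/ℓℤ)^{2g} = V_1 ⊕ ⋯ ⊕ V_k into k ≥ 2 nonzero subspaces which are permuted by the action of H. Then H contains Sp_{2g}(ℤ/ℓℤ). -/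

import Mathlib

open Matrix

/-- The standard symplectic matrix `Ω`, block-diagonal with `2×2` blocks `[[0,1],[-1,0]]`. -/
def OmegaMat (g : ℕ) (R : Type) [CommRing R] : Matrix (Fin (2*g)) (Fin (2*g)) R :=
  Matrix.of fun i j =>
    if (i : ℕ) + 1 = (j : ℕ) ∧ (j : ℕ) % 2 = 1 then 1
    else if (j : ℕ) + 1 = (i : ℕ) ∧ (i : ℕ) % 2 = 1 then -1 else 0

/-- The symplectic group `Sp_{2g}(R)`, as a set of invertible matrices:
those `S` with `SᵀΩS = Ω`. -/
def SpSet (g : ℕ) (R : Type) [CommRing R] : Set (GL (Fin (2*g)) R) :=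
  {S | (S : Matrix (Fin (2*g)) (Fin (2*g)) R)ᵀ * OmegaMat g R * S = OmegaMat g R}

/-- The general symplectic group `GSp_{2g}(R)`, as a set of invertible matrices:
those `S` with `SᵀΩS = m·Ω` for some unit `m` (the multiplier). -/
def GSpSet (g : ℕ) (R : Type) [CommRing R] : Set (GL (Fin (2*g)) R) :=
  {S | ∃ m : Rˣ, (S : Matrix (Fin (2*g)) (Fin (2*g)) R)ᵀ * OmegaMat g R * S = (m : R) • OmegaMat g R}

/-!
Call `v` a root vector of `H` if all the symplectic transvections `x ↦ x + c ω(v, x) v` lie in `H`.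
Over a prime field a single transvection of `H` generates such a root subgroup, and conjugation by
`H` then gives a spanning set of root vectors, in which the sum of two nonorthogonal root vectors is
again one. In the graph joining nonorthogonal root vectors, having a common neighbour is an
equivalence relation whose classes are pairwise orthogonal, so that the spans of the classes form a
decomposition of the space permuted by `H`. If `H` is primitive there is only one class, and in
characteristic other than `2` a nonzero sum of two vectors of the same class is a root vector: every
nonzero vector is one. Finally the symplectic transvections generate the symplectic group, since a
nontrivial isometry can be multiplied by at most two of them so as to enlarge its space of fixed
vectors.
-/

open LinearMap (BilinForm)

section Similitudes

variable {R M : Type*} [CommRing R] [AddCommGroup M] [Module R M] {ω : BilinForm R M}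

/-- The group of linear automorphisms preserving `ω`; this is `Sp(ω)` when `ω` is alternating and
nondegenerate. -/
def isometryGroup (ω : BilinForm R M) : Subgroup (M ≃ₗ[R] M) where
  carrier := {e | ∀ x y, ω (e x) (e y) = ω x y}
  mul_mem' ha hb x y := (ha _ _).trans (hb x y)
  one_mem' _ _ := rfl
  inv_mem' {e} he x y := by simpa using (he (e⁻¹ x) (e⁻¹ y)).symm

/-- The group of linear automorphisms scaling `ω` by a unit; this is `GSp(ω)` when `ω` is
alternating and nondegenerate. -/
def similitudeGroup (ω : BilinForm R M) : Subgroup (M ≃ₗ[R] M) where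
  carrier := {e | ∃ m : Rˣ, ∀ x y, ω (e x) (e y) = m * ω x y}
  mul_mem' := by
    rintro a b ⟨m, ha⟩ ⟨n, hb⟩
    exact ⟨m * n, fun x y => by simp [ha, hb, mul_assoc]⟩
  one_mem' := ⟨1, by simp⟩
  inv_mem' := by
    rintro e ⟨m, he⟩
    refine ⟨m⁻¹, fun x y => ?_⟩
    rw [Units.eq_inv_mul_iff_mul_eq, ← he]
    simp

/-- The symplectic transvection `x ↦ x + c ω(v, x) v`. -/
def symplecticTransvection (alt : ω.IsAlt) (v : M) (c : R) : M ≃ₗ[R] M :=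
  LinearEquiv.transvection (f := c • ω v) (v := v) (by simp [alt v])

variable {alt : ω.IsAlt}

@[simp]
theorem symplecticTransvection_apply (v : M) (c : R) (x : M) :
    symplecticTransvection alt v c x = x + (c * ω v x) • v := by
  simp [symplecticTransvection, LinearMap.transvection.apply]

theorem symplecticTransvection_mem_isometryGroup (v : M) (c : R) :
    symplecticTransvection alt v c ∈ isometryGroup ω := by
  intro x y
  simp only [symplecticTransvection_apply, map_add, map_smul, LinearMap.add_apply,
    LinearMap.smul_apply, smul_eq_mul, alt v, ← alt.neg_eq v x]
  ring

theorem symplecticTransvection_smul (a : R) (v : M) (c : R) :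
    symplecticTransvection alt (a • v) c = symplecticTransvection alt v (a ^ 2 * c) := by
  ext x
  simp only [symplecticTransvection_apply, map_smul, LinearMap.smul_apply, smul_eq_mul]
  module

/-- The root subgroup of direction `v`: the homomorphism `c ↦ (x ↦ x + c ω(v, x) v)`. -/
def symplecticTransvectionHom (alt : ω.IsAlt) (v : M) : Multiplicative R →* (M ≃ₗ[R] M) where
  toFun c := symplecticTransvection alt v c.toAdd
  map_one' := by
    ext x
    simp
  map_mul' a b := by
    ext x
    simp only [toAdd_mul, LinearEquiv.mul_apply, symplecticTransvection_apply, map_add, map_smul,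
      alt v]
    module

theorem symplecticTransvection_map {e : M ≃ₗ[R] M} {m : R}
    (he : ∀ x y, ω (e x) (e y) = m * ω x y) (v : M) (c : R) :
    symplecticTransvection alt (e v) c = e * symplecticTransvection alt v (m * c) * e⁻¹ := by
  rw [eq_mul_inv_iff_mul_eq]
  ext x
  simp only [symplecticTransvection_apply, LinearEquiv.mul_apply, map_add, map_smul, he]
  module

theorem symplecticTransvection_mem_of_ne_zero {p : ℕ} [Fact p.Prime] [Module (ZMod p) M]
    {ω : BilinForm (ZMod p) M} {alt : ω.IsAlt} {H : Subgroup (M ≃ₗ[ZMod p] M)} {v : M} {c : ZMod p}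
    (hc : c ≠ 0) (h : symplecticTransvection alt v c ∈ H) (a : ZMod p) :
    symplecticTransvection alt v a ∈ H := by
  have hne : Subgroup.toAddSubgroup' (H.comap (symplecticTransvectionHom alt v)) ≠ ⊥ := fun hbot =>
    hc ((AddSubgroup.eq_bot_iff_forall _).mp hbot c h)
  have htop := (IsSimpleAddGroup.eq_bot_or_eq_top_of_normal _ inferInstance).resolve_left hne
  exact htop.ge (AddSubgroup.mem_top a)

/-- The directions of the root subgroups contained in `H`. -/
def rootVectors (alt : ω.IsAlt) (H : Subgroup (M ≃ₗ[R] M)) : Set M :=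
  {v | v ≠ 0 ∧ ∀ c, symplecticTransvection alt v c ∈ H}

end Similitudes

section RootSets

variable {K V : Type*} [Field K] [AddCommGroup V] [Module K V] {ω : BilinForm K V} {S : Set V}
  {u v w x y z : V}

/-- The properties of the set of directions of the root subgroups of an irreducible group of
similitudes on which the argument rests: it is a spanning set of nonzero vectors, closed under
nonzero scalars and under sums of nonorthogonal vectors. -/
structure IsRootSet (ω : BilinForm K V) (S : Set V) : Prop where
  ne_zero : ∀ {x}, x ∈ S → x ≠ 0
  smul_mem : ∀ {a : K} {x}, a ≠ 0 → x ∈ S → a • x ∈ S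
  add_mem : ∀ {x y}, x ∈ S → y ∈ S → ω x y ≠ 0 → x + y ∈ S
  span_eq_top : Submodule.span K S = ⊤

/-- `u` and `v` have a common neighbour in the graph on `S` whose edges are the nonorthogonal
pairs. -/
def HasCommonNeighbor (ω : BilinForm K V) (S : Set V) (u v : V) : Prop :=
  ∃ w ∈ S, ω u w ≠ 0 ∧ ω v w ≠ 0

theorem HasCommonNeighbor.symm (h : HasCommonNeighbor ω S u v) : HasCommonNeighbor ω S v u := by
  obtain ⟨w, hw, huw, hvw⟩ := h
  exact ⟨w, hw, hvw, huw⟩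

namespace IsRootSet

theorem sub_mem (hS : IsRootSet ω S) (hx : x ∈ S) (hy : y ∈ S) (hxy : ω x y ≠ 0) : x - y ∈ S := by
  rw [sub_eq_add_neg, ← neg_one_smul K]
  exact hS.add_mem hx (hS.smul_mem (neg_ne_zero.mpr one_ne_zero) hy) (by simpa using hxy)

theorem add_smul_mem (hS : IsRootSet ω S) (hx : x ∈ S) (hy : y ∈ S) (hxy : ω x y ≠ 0) (a : K) :
    x + a • y ∈ S := by
  rcases eq_or_ne a 0 with rfl | ha
  · simpa using hx
  · exact hS.add_mem hx (hS.smul_mem ha hy) (by simp [ha, hxy])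

theorem add_mem_of_apply_add_ne_zero (hS : IsRootSet ω S) (alt : ω.IsAlt) (hu : u ∈ S) (hv : v ∈ S)
    (hw : w ∈ S) (huw : ω u w ≠ 0) (hvw : ω v w ≠ 0) (h : ω (u + v) w ≠ 0) : u + v ∈ S := by
  by_cases huv : ω u v = 0
  · have huwv : u + w + v ∈ S := hS.add_mem (hS.add_mem hu hw huw) hv <| by
      simpa [huv] using alt.eq_iff.not.mp hvw
    have huwvw : u + w + v - w ∈ S := hS.sub_mem huwv hw <| by
      simpa [alt w] using h
    rwa [show u + w + v - w = u + v by abel] at huwvw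
  · exact hS.add_mem hu hv huv

-- For a suitable `z' ∈ z + K u` the previous lemma gives `u + z' + v ∈ S`, and `z'` can be removed
-- because `v` is orthogonal to it while `u` is not.
theorem add_mem_of_apply_eq_zero [NeZero (2 : K)] (hS : IsRootSet ω S) (alt : ω.IsAlt) (hu : u ∈ S)
    (hv : v ∈ S) (hw : w ∈ S) (hz : z ∈ S) (huw : ω u w ≠ 0) (hvw : ω v w ≠ 0)
    (huvw : ω (u + v) w = 0) (huz : ω u z ≠ 0) (hvz : ω v z = 0) : u + v ∈ S := by
  by_cases huv : ω u v = 0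
  · obtain ⟨z', hz', huz', hvz', hzw'⟩ :
        ∃ z' ∈ S, ω u z' ≠ 0 ∧ ω v z' = 0 ∧ ω z' w = ω u w := by
      refine ⟨z + ((ω u w - ω z w) / ω u w) • u,
        hS.add_smul_mem hz hu (alt.eq_iff.not.mp huz) _, ?_, ?_, ?_⟩
      · simpa [alt u] using huz
      · simp [hvz, alt.eq_iff.mp huv]
      · simp [huw]
    have hsum : u + z' + v ∈ S := by
      refine hS.add_mem_of_apply_add_ne_zero alt (hS.add_mem hu hz' huz') hv hw ?_ hvw ?_
      · simpa [hzw', ← two_mul, two_ne_zero] using huw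
      · rwa [add_right_comm, map_add, LinearMap.add_apply, huvw, zero_add, hzw']
    have hsub : u + z' + v - z' ∈ S := hS.sub_mem hsum hz' <| by
      simpa [alt z', hvz'] using huz'
    rwa [show u + z' + v - z' = u + v by abel] at hsub
  · exact hS.add_mem hu hv huv

theorem eq_zero_of_forall_apply_eq_zero (hS : IsRootSet ω S) (nondeg : ω.Nondegenerate)
    (h : ∀ s ∈ S, ω x s = 0) : x = 0 := by
  have hle : Submodule.span K S ≤ LinearMap.ker (ω x) := Submodule.span_le.mpr h
  rw [hS.span_eq_top] at hle
  exact nondeg.1 x fun y => hle (Submodule.mem_top (x := y))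

theorem exists_apply_ne_zero (hS : IsRootSet ω S) (nondeg : ω.Nondegenerate) (hx : x ≠ 0) :
    ∃ s ∈ S, ω x s ≠ 0 := by
  by_contra! h
  exact hx (hS.eq_zero_of_forall_apply_eq_zero nondeg h)

theorem add_mem_of_hasCommonNeighbor [NeZero (2 : K)] (hS : IsRootSet ω S) (alt : ω.IsAlt)
    (nondeg : ω.Nondegenerate) (hu : u ∈ S) (hv : v ∈ S) (huv : HasCommonNeighbor ω S u v)
    (hne : u + v ≠ 0) : u + v ∈ S := by
  obtain ⟨w, hw, huw, hvw⟩ := huv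
  by_cases huvw : ω (u + v) w = 0
  · obtain ⟨z, hz, huvz⟩ := hS.exists_apply_ne_zero nondeg hne
    by_cases huz : ω u z = 0
    · have hvz : ω v z ≠ 0 := by simpa [huz] using huvz
      rw [add_comm] at huvw ⊢
      exact hS.add_mem_of_apply_eq_zero alt hv hu hw hz hvw huw huvw hvz huz
    · by_cases hvz : ω v z = 0
      · exact hS.add_mem_of_apply_eq_zero alt hu hv hw hz huw hvw huvw huz hvz
      · exact hS.add_mem_of_apply_add_ne_zero alt hu hv hz huz hvz huvz
  · exact hS.add_mem_of_apply_add_ne_zero alt hu hv hw huw hvw huvw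

theorem mem_of_forall_hasCommonNeighbor [NeZero (2 : K)] (hS : IsRootSet ω S) (alt : ω.IsAlt)
    (nondeg : ω.Nondegenerate) (h : ∀ u ∈ S, ∀ v ∈ S, HasCommonNeighbor ω S u v) (hx : x ≠ 0) :
    x ∈ S := by
  suffices x = 0 ∨ x ∈ S from this.resolve_left hx
  have hspan : x ∈ Submodule.span K S := hS.span_eq_top ▸ Submodule.mem_top
  clear hx
  induction hspan using Submodule.span_induction with
  | mem y hy => exact Or.inr hy
  | zero => exact Or.inl rfl
  | add y z _ _ ihy ihz =>
    rcases ihy with rfl | hy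
    · simpa using ihz
    rcases ihz with rfl | hz
    · simpa using Or.inr hy
    rw [or_iff_not_imp_left]
    exact hS.add_mem_of_hasCommonNeighbor alt nondeg hy hz (h y hy z hz)
  | smul a y _ ih =>
    rcases ih with rfl | hy
    · simp
    rcases eq_or_ne a 0 with rfl | ha
    · simp
    · exact Or.inr (hS.smul_mem ha hy)

theorem hasCommonNeighbor_refl (hS : IsRootSet ω S) (nondeg : ω.Nondegenerate) (hu : u ∈ S) :
    HasCommonNeighbor ω S u u := by
  obtain ⟨w, hw, huw⟩ := hS.exists_apply_ne_zero nondeg (hS.ne_zero hu)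
  exact ⟨w, hw, huw, huw⟩

theorem hasCommonNeighbor_of_apply_ne_zero (hS : IsRootSet ω S) (alt : ω.IsAlt) (hu : u ∈ S)
    (hv : v ∈ S) (huv : ω u v ≠ 0) : HasCommonNeighbor ω S u v :=
  ⟨u + v, hS.add_mem hu hv huv, by simpa [alt u] using huv,
    by simpa [alt v] using alt.eq_iff.not.mp huv⟩

theorem hasCommonNeighbor_of_path (hS : IsRootSet ω S) {w₁ w₂ : V} (hw₁ : w₁ ∈ S) (hw₂ : w₂ ∈ S)
    (huw₁ : ω u w₁ ≠ 0) (hw₁w₂ : ω w₁ w₂ ≠ 0) (hvw₂ : ω v w₂ ≠ 0) : HasCommonNeighbor ω S u v := by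
  by_cases huw₂ : ω u w₂ = 0
  · by_cases hvw₁ : ω v w₁ = 0
    · exact ⟨w₁ + w₂, hS.add_mem hw₁ hw₂ hw₁w₂, by simpa [huw₂] using huw₁,
        by simpa [hvw₁] using hvw₂⟩
    · exact ⟨w₁, hw₁, huw₁, hvw₁⟩
  · exact ⟨w₂, hw₂, huw₂, hvw₂⟩

theorem hasCommonNeighbor_trans (hS : IsRootSet ω S) (alt : ω.IsAlt) (hv : v ∈ S)
    (huv : HasCommonNeighbor ω S u v) (hvx : HasCommonNeighbor ω S v x) :
    HasCommonNeighbor ω S u x := by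
  obtain ⟨w₁, hw₁, huw₁, hvw₁⟩ := huv
  obtain ⟨w₂, hw₂, hvw₂, hxw₂⟩ := hvx
  obtain ⟨t, ht, hut, hw₂t⟩ := hS.hasCommonNeighbor_of_path hw₁ hv huw₁ (alt.eq_iff.not.mp hvw₁)
    (alt.eq_iff.not.mp hvw₂)
  exact hS.hasCommonNeighbor_of_path ht hw₂ hut (alt.eq_iff.not.mp hw₂t) hxw₂

end IsRootSet

/-- The block of `u`: the span of the vectors of `S` having a common neighbour with `u`. -/
def rootBlock (ω : BilinForm K V) (S : Set V) (u : V) : Submodule K V :=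
  Submodule.span K {x ∈ S | HasCommonNeighbor ω S u x}

theorem map_rootBlock {e : V ≃ₗ[K] V} (he : e ∈ similitudeGroup ω) (heS : ∀ x, e x ∈ S ↔ x ∈ S) :
    (rootBlock ω S u).map (e : V →ₗ[K] V) = rootBlock ω S (e u) := by
  obtain ⟨m, hm⟩ := he
  have hneighbor (x : V) : HasCommonNeighbor ω S (e u) (e x) ↔ HasCommonNeighbor ω S u x := by
    rw [HasCommonNeighbor, e.surjective.exists]
    simp [HasCommonNeighbor, heS, hm]
  rw [rootBlock, rootBlock, Submodule.map_span]
  congr 1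
  ext x
  obtain ⟨x, rfl⟩ := e.surjective x
  simp [heS, hneighbor]

namespace IsRootSet

theorem mem_rootBlock_self (hS : IsRootSet ω S) (nondeg : ω.Nondegenerate) (hu : u ∈ S) :
    u ∈ rootBlock ω S u :=
  Submodule.subset_span ⟨hu, hS.hasCommonNeighbor_refl nondeg hu⟩

theorem apply_eq_zero_of_mem_rootBlock (hS : IsRootSet ω S) (alt : ω.IsAlt) (hv : v ∈ S)
    (huv : ¬HasCommonNeighbor ω S u v) (hx : x ∈ rootBlock ω S u) : ω x v = 0 := by
  suffices rootBlock ω S u ≤ LinearMap.ker (ω.flip v) from this hx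
  rintro _ hx
  refine Submodule.span_le.mpr (fun y hy => ?_) hx
  by_contra hyv
  exact huv <| hS.hasCommonNeighbor_trans alt hy.1 hy.2 <|
    hS.hasCommonNeighbor_of_apply_ne_zero alt hy.1 hv hyv

theorem rootBlock_eq_iff (hS : IsRootSet ω S) (alt : ω.IsAlt) (nondeg : ω.Nondegenerate)
    (hu : u ∈ S) (hv : v ∈ S) :
    rootBlock ω S u = rootBlock ω S v ↔ HasCommonNeighbor ω S u v := by
  refine ⟨fun h => ?_, fun huv => ?_⟩
  · by_contra huv
    obtain ⟨w, hw, hvw⟩ := hS.exists_apply_ne_zero nondeg (hS.ne_zero hv)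
    have hwv : w ∈ rootBlock ω S u := h ▸ Submodule.subset_span
      ⟨hw, hS.hasCommonNeighbor_of_apply_ne_zero alt hv hw hvw⟩
    exact hvw (alt.eq_iff.mp (hS.apply_eq_zero_of_mem_rootBlock alt hv huv hwv))
  · have hneighbor (x : V) : HasCommonNeighbor ω S u x ↔ HasCommonNeighbor ω S v x :=
      ⟨hS.hasCommonNeighbor_trans alt hu huv.symm, hS.hasCommonNeighbor_trans alt hv huv⟩
    simp only [rootBlock, hneighbor]

theorem sSup_rootBlock (hS : IsRootSet ω S) (nondeg : ω.Nondegenerate) :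
    sSup (rootBlock ω S '' S) = ⊤ := by
  rw [eq_top_iff, ← hS.span_eq_top, Submodule.span_le]
  exact fun u hu =>
    (le_sSup (Set.mem_image_of_mem _ hu) : rootBlock ω S u ≤ _) (hS.mem_rootBlock_self nondeg hu)

-- Distinct blocks are orthogonal, so a vector lying both in one block and in the sum of the others
-- is orthogonal to all of `S`.
theorem sSupIndep_rootBlock (hS : IsRootSet ω S) (alt : ω.IsAlt) (nondeg : ω.Nondegenerate) :
    sSupIndep (rootBlock ω S '' S) := by
  rintro _ ⟨u, hu, rfl⟩
  refine Submodule.disjoint_def.mpr fun x hxu hx => ?_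
  refine hS.eq_zero_of_forall_apply_eq_zero nondeg fun s hs => ?_
  by_cases hus : HasCommonNeighbor ω S u s
  · suffices sSup (rootBlock ω S '' S \ {rootBlock ω S u}) ≤ LinearMap.ker (ω.flip s) from this hx
    refine sSup_le ?_
    rintro _ ⟨⟨v, hv, rfl⟩, hvu⟩ y hy
    refine hS.apply_eq_zero_of_mem_rootBlock alt hs (fun hvs => hvu ?_) hy
    exact (hS.rootBlock_eq_iff alt nondeg hv hu).mpr
      (hS.hasCommonNeighbor_trans alt hs hvs hus.symm)
  · exact hS.apply_eq_zero_of_mem_rootBlock alt hs hus hxu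

end IsRootSet

end RootSets

section Primitivity

variable {K V : Type*} [Field K] [AddCommGroup V] [Module K V] {H : Subgroup (V ≃ₗ[K] V)}

/-- A decomposition of `V` as an internal direct sum of a set `𝒟` of nonzero subspaces permuted by
`H`. -/
structure IsImprimitivitySystem (H : Subgroup (V ≃ₗ[K] V)) (𝒟 : Set (Submodule K V)) : Prop where
  bot_notMem : ⊥ ∉ 𝒟
  sSupIndep : sSupIndep 𝒟
  sSup_eq_top : sSup 𝒟 = ⊤
  map_mem : ∀ h ∈ H, ∀ W ∈ 𝒟, W.map (h : V →ₗ[K] V) ∈ 𝒟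

/-- `H` permutes the summands of no direct sum decomposition of `V` with at least two nonzero
summands. -/
def IsPrimitiveLinearGroup (H : Subgroup (V ≃ₗ[K] V)) : Prop :=
  ∀ 𝒟, IsImprimitivitySystem H 𝒟 → 𝒟.Subsingleton

theorem IsImprimitivitySystem.exists_perm {𝒟 : Set (Submodule K V)} [Finite 𝒟]
    (h𝒟 : IsImprimitivitySystem H 𝒟) {h : V ≃ₗ[K] V} (hh : h ∈ H) :
    ∃ π : Equiv.Perm 𝒟, ∀ W : 𝒟, (W : Submodule K V).map (h : V →ₗ[K] V) = π W := by
  let f (W : 𝒟) : 𝒟 := ⟨_, h𝒟.map_mem h hh W W.2⟩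
  have hf : Function.Injective f := fun W W' heq =>
    Subtype.ext (Submodule.map_injective_of_injective h.injective (congrArg Subtype.val heq))
  exact ⟨Equiv.ofBijective f (Finite.injective_iff_bijective.mp hf), fun _ => rfl⟩

theorem isPrimitiveLinearGroup_of_not_exists_fin [FiniteDimensional K V]
    (hprim : ¬∃ k : ℕ, 2 ≤ k ∧ ∃ W : Fin k → Submodule K V,
      (∀ i, W i ≠ ⊥) ∧ iSupIndep W ∧ ⨆ i, W i = ⊤ ∧
        ∀ h ∈ H, ∃ π : Equiv.Perm (Fin k), ∀ i, (W i).map (h : V →ₗ[K] V) = W (π i)) :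
    IsPrimitiveLinearGroup H := by
  refine fun 𝒟 h𝒟 => not_imp_comm.mp (fun hnontriv => ?_) hprim
  have : Finite 𝒟 := WellFoundedGT.finite_of_sSupIndep h𝒟.sSupIndep
  have : Nontrivial 𝒟 := Set.nontrivial_coe_sort.mpr (Set.not_subsingleton_iff.mp hnontriv)
  let e := (Finite.equivFin 𝒟).symm
  refine ⟨Nat.card 𝒟, Finite.one_lt_card, fun i => e i, fun i hi => h𝒟.bot_notMem (hi ▸ (e i).2),
    ((sSupIndep_iff 𝒟).mp h𝒟.sSupIndep).comp e.injective, ?_, fun h hh => ?_⟩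
  · rw [e.surjective.iSup_comp (fun W : 𝒟 => (W : Submodule K V)), ← sSup_eq_iSup',
      h𝒟.sSup_eq_top]
  · obtain ⟨π, hπ⟩ := h𝒟.exists_perm hh
    exact ⟨(e.trans π).trans e.symm, fun i =>
      (hπ (e i)).trans (congrArg Subtype.val (e.apply_symm_apply (π (e i))).symm)⟩

theorem IsRootSet.isImprimitivitySystem {ω : BilinForm K V} {S : Set V} (hS : IsRootSet ω S)
    (alt : ω.IsAlt) (nondeg : ω.Nondegenerate) (hH : H ≤ similitudeGroup ω)
    (hHS : ∀ h ∈ H, ∀ x, h x ∈ S ↔ x ∈ S) : IsImprimitivitySystem H (rootBlock ω S '' S) where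
  bot_notMem := by
    rintro ⟨u, hu, hbot⟩
    exact hS.ne_zero hu ((Submodule.mem_bot K).mp (hbot ▸ hS.mem_rootBlock_self nondeg hu))
  sSupIndep := hS.sSupIndep_rootBlock alt nondeg
  sSup_eq_top := hS.sSup_rootBlock nondeg
  map_mem := by
    rintro h hh _ ⟨u, hu, rfl⟩
    exact ⟨h u, (hHS h hh u).mpr hu, (map_rootBlock (hH hh) (hHS h hh)).symm⟩

theorem IsRootSet.mem_of_isPrimitiveLinearGroup [NeZero (2 : K)] {ω : BilinForm K V} {S : Set V}
    (hS : IsRootSet ω S) (alt : ω.IsAlt) (nondeg : ω.Nondegenerate) (hH : H ≤ similitudeGroup ω)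
    (hHS : ∀ h ∈ H, ∀ x, h x ∈ S ↔ x ∈ S) (hprim : IsPrimitiveLinearGroup H) {x : V} (hx : x ≠ 0) :
    x ∈ S :=
  hS.mem_of_forall_hasCommonNeighbor alt nondeg (hx := hx) fun _ hu _ hv =>
    (hS.rootBlock_eq_iff alt nondeg hu hv).mp <|
      hprim _ (hS.isImprimitivitySystem alt nondeg hH hHS) (Set.mem_image_of_mem _ hu)
        (Set.mem_image_of_mem _ hv)

end Primitivity

section RootVectors

variable {K V : Type*} [Field K] [AddCommGroup V] [Module K V] {ω : BilinForm K V} {alt : ω.IsAlt}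
  {H : Subgroup (V ≃ₗ[K] V)}

theorem apply_mem_rootVectors (hH : H ≤ similitudeGroup ω) {h : V ≃ₗ[K] V} (hh : h ∈ H) {v : V}
    (hv : v ∈ rootVectors alt H) : h v ∈ rootVectors alt H := by
  obtain ⟨m, hm⟩ := hH hh
  refine ⟨h.map_ne_zero_iff.mpr hv.1, fun c => ?_⟩
  rw [symplecticTransvection_map hm]
  exact mul_mem (mul_mem hh (hv.2 _)) (inv_mem hh)

theorem apply_mem_rootVectors_iff (hH : H ≤ similitudeGroup ω) {h : V ≃ₗ[K] V} (hh : h ∈ H)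
    {v : V} : h v ∈ rootVectors alt H ↔ v ∈ rootVectors alt H := by
  refine ⟨fun hv => ?_, apply_mem_rootVectors hH hh⟩
  simpa using apply_mem_rootVectors hH (inv_mem hh) hv

theorem isRootSet_rootVectors (hH : H ≤ similitudeGroup ω)
    (hirr : ∀ W : Submodule K V, (∀ h ∈ H, ∀ v ∈ W, h v ∈ W) → W = ⊥ ∨ W = ⊤)
    (hne : (rootVectors alt H).Nonempty) : IsRootSet ω (rootVectors alt H) where
  ne_zero hx := hx.1
  smul_mem {a x} ha hx := ⟨smul_ne_zero ha hx.1, fun c => by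
    rw [symplecticTransvection_smul]
    exact hx.2 _⟩
  add_mem {x y} hx hy hxy := by
    have hadd : symplecticTransvection alt y (ω y x)⁻¹ x = x + y := by
      simp [alt.eq_iff.not.mp hxy]
    exact hadd ▸ apply_mem_rootVectors hH (hy.2 _) hx
  span_eq_top := by
    obtain ⟨v, hv⟩ := hne
    refine (hirr _ fun h hh x hx => ?_).resolve_left fun hbot =>
      hv.1 ((Submodule.mem_bot K).mp (hbot ▸ Submodule.subset_span hv))
    suffices Submodule.span K (rootVectors alt H) ≤
      (Submodule.span K (rootVectors alt H)).comap (h : V →ₗ[K] V) from this hx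
    exact Submodule.span_le.mpr fun y hy => Submodule.subset_span (apply_mem_rootVectors hH hh hy)

end RootVectors

section Generation

variable {K V : Type*} [Field K] [AddCommGroup V] [Module K V] {ω : BilinForm K V}
  {alt : ω.IsAlt} {e : V ≃ₗ[K] V}

/-- The group generated by the symplectic transvections. -/
def transvectionGroup (alt : ω.IsAlt) : Subgroup (V ≃ₗ[K] V) :=
  Subgroup.closure (Set.range fun p : V × K => symplecticTransvection alt p.1 p.2)

theorem transvectionGroup_le_iff {H : Subgroup (V ≃ₗ[K] V)} :
    transvectionGroup alt ≤ H ↔ ∀ v c, symplecticTransvection alt v c ∈ H := by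
  simp [transvectionGroup, Set.range_subset_iff]

theorem exists_mem_transvectionGroup_apply_eq {x y : V} (hxy : ω x y ≠ 0) :
    ∃ t ∈ transvectionGroup alt, t x = y ∧ ∀ z, ω x z = ω y z → t z = z := by
  refine ⟨symplecticTransvection alt (y - x) (ω y x)⁻¹, transvectionGroup_le_iff.mp le_rfl _ _, ?_,
    fun z hz => ?_⟩
  · simp [alt x, alt.eq_iff.not.mp hxy]
  · simp [hz]

theorem apply_apply_eq_of_mem_isometryGroup (he : e ∈ isometryGroup ω) (x : V) {z : V}
    (hz : e z = z) : ω (e x) z = ω x z := by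
  simpa only [hz] using he x z

-- No symplectic transvection maps `e x` to `x`, but two do by way of the vector `x + e y - y`.
theorem exists_mem_transvectionGroup_apply_apply_eq_of_forall_apply_eq_zero
    (he : e ∈ isometryGroup ω) (horth : ∀ x, ω (e x) x = 0) {x y : V} (hxy : ω (e x - x) y ≠ 0) :
    ∃ t ∈ transvectionGroup alt, t (e x) = x ∧ ∀ z, e z = z → t z = z := by
  have hpolar : ω (e x) y = ω x (e y) := by
    have hsum := horth (x + y)
    simp only [map_add, LinearMap.add_apply, horth] at hsum
    linear_combination hsum + alt.neg_eq x (e y)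
  have hfst : ω (e x) (x + e y - y) ≠ 0 := by
    have : ω (e x) (x + e y - y) = -ω (e x - x) y := by simp [horth, he x y]
    rwa [this, neg_ne_zero]
  have hsnd : ω (x + e y - y) x ≠ 0 := by
    have : ω (x + e y - y) x = -ω (e x - x) y := by
      simp only [map_sub, map_add, LinearMap.sub_apply, LinearMap.add_apply, alt x, ← alt.neg_eq x,
        zero_add, sub_neg_eq_add, hpolar, neg_sub]
      ring
    rwa [this, neg_ne_zero]
  obtain ⟨t, ht, htx, htz⟩ := exists_mem_transvectionGroup_apply_eq (alt := alt) hfst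
  obtain ⟨s, hs, hsx, hsz⟩ := exists_mem_transvectionGroup_apply_eq (alt := alt) hsnd
  refine ⟨s * t, mul_mem hs ht, by simp [htx, hsx], fun z hz => ?_⟩
  have hmid : ω (x + e y - y) z = ω x z := by
    simp [apply_apply_eq_of_mem_isometryGroup he y hz]
  rw [LinearEquiv.mul_apply, htz z, hsz z hmid]
  rw [hmid, apply_apply_eq_of_mem_isometryGroup he x hz]

theorem exists_mem_transvectionGroup_apply_apply_eq (nondeg : ω.Nondegenerate)
    (he : e ∈ isometryGroup ω) (hne : e ≠ 1) :
    ∃ x, e x ≠ x ∧ ∃ t ∈ transvectionGroup alt, t (e x) = x ∧ ∀ z, e z = z → t z = z := by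
  by_cases! horth : ∀ x, ω (e x) x = 0
  · obtain ⟨x, hx⟩ : ∃ x, e x ≠ x := by
      contrapose! hne
      exact LinearEquiv.ext hne
    obtain ⟨y, hxy⟩ : ∃ y, ω (e x - x) y ≠ 0 := by
      by_contra! h
      exact sub_ne_zero.mpr hx (nondeg.1 _ h)
    exact ⟨x, hx, exists_mem_transvectionGroup_apply_apply_eq_of_forall_apply_eq_zero he horth hxy⟩
  · obtain ⟨x, hx⟩ := horth
    obtain ⟨t, ht, htx, htz⟩ := exists_mem_transvectionGroup_apply_eq (alt := alt) hx
    exact ⟨x, fun heq => hx (by rw [heq, alt x]), t, ht, htx, fun z hz =>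
      htz z (apply_apply_eq_of_mem_isometryGroup he x hz)⟩

theorem transvectionGroup_le_isometryGroup : transvectionGroup alt ≤ isometryGroup ω :=
  transvectionGroup_le_iff.mpr symplecticTransvection_mem_isometryGroup

theorem transvectionGroup_eq_isometryGroup [FiniteDimensional K V] (nondeg : ω.Nondegenerate) :
    transvectionGroup alt = isometryGroup ω := by
  refine transvectionGroup_le_isometryGroup.antisymm fun e he => ?_
  induction hW : e.fixedSubmodule using WellFoundedGT.induction generalizing e with
  | ind W ih =>
  subst hW
  rcases eq_or_ne e 1 with rfl | hne
  · exact one_mem _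
  obtain ⟨x, hx, t, ht, htx, htz⟩ :=
    exists_mem_transvectionGroup_apply_apply_eq (alt := alt) nondeg he hne
  have hlt : e.fixedSubmodule < (t * e).fixedSubmodule := by
    refine SetLike.lt_iff_le_and_exists.mpr ⟨fun z hz => ?_, x, ?_, ?_⟩
    · simp only [LinearMap.mem_fixedSubmodule_iff, LinearEquiv.coe_coe] at hz ⊢
      rw [LinearEquiv.mul_apply, hz, htz z hz]
    · simpa using htx
    · simpa using hx
  exact (Subgroup.mul_mem_cancel_left _ ht).mp
    (ih _ hlt (t * e) (mul_mem (transvectionGroup_le_isometryGroup ht) he) rfl)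

end Generation

section Transvections

variable {K V : Type*} [Field K] [AddCommGroup V] [Module K V] {e : V ≃ₗ[K] V}

theorem mem_transvections_of_det_eq_one [FiniteDimensional K V] {W : Submodule K V}
    (hdet : LinearEquiv.det e = 1) (hW : Module.finrank K V ≤ Module.finrank K W + 1)
    (he : ∀ x ∈ W, e x = x) : e ∈ LinearEquiv.transvections K V := by
  have hle : Module.finrank K W ≤ Module.finrank K e.fixedSubmodule :=
    Submodule.finrank_mono fun x hx => by simpa using he x hx
  obtain ⟨f, v, hfv⟩ : e ∈ LinearEquiv.dilatransvections K V := by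
    rw [LinearEquiv.mem_dilatransvections_iff_finrank_quotient, Submodule.finrank_quotient]
    lia
  have hdet' : 1 + f v = 1 := by
    rw [← LinearMap.transvection.det, ← hfv, ← LinearEquiv.coe_det, hdet, Units.val_one]
  exact ⟨f, v, add_eq_left.mp hdet', LinearEquiv.toLinearMap_injective hfv⟩

variable {ω : BilinForm K V} {alt : ω.IsAlt}

theorem exists_eq_symplecticTransvection (nondeg : ω.Nondegenerate) (he : e ∈ similitudeGroup ω)
    (hte : e ∈ LinearEquiv.transvections K V) (hne : e ≠ 1) :
    ∃ v ≠ 0, ∃ c ≠ 0, e = symplecticTransvection alt v c := by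
  obtain ⟨m, hm⟩ := he
  obtain ⟨f, v, hfv, rfl⟩ := hte
  simp only [LinearEquiv.transvection.apply] at hm
  have hv : v ≠ 0 := by
    rintro rfl
    exact hne (LinearEquiv.transvection.of_right_eq_zero f)
  obtain ⟨y, hy⟩ : ∃ y, ω v y ≠ 0 := by
    by_contra! h
    exact hv (nondeg.1 v h)
  have hm1 : (m : K) = 1 := by simpa [hfv, alt v, hy] using hm v y
  have hf (x : V) : f x = f y / ω v y * ω v x := by
    have hxy := hm x y
    simp only [hm1, map_add, map_smul, LinearMap.add_apply, LinearMap.smul_apply, alt v,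
      smul_eq_mul] at hxy
    field_simp
    linear_combination hxy + f y * alt.neg_eq v x
  have he : LinearEquiv.transvection hfv = symplecticTransvection alt v (f y / ω v y) := by
    ext x
    rw [LinearEquiv.transvection.apply, symplecticTransvection_apply, hf x]
  refine ⟨v, hv, f y / ω v y, fun hc => hne ?_, he⟩
  ext x
  simp [he, hc]

end Transvections

section Symplectic

variable {K V : Type*} [Field K] [AddCommGroup V] [Module K V] {ω : BilinForm K V} {alt : ω.IsAlt}

theorem isometryGroup_le_of_rootVectors_nonempty [NeZero (2 : K)] [FiniteDimensional K V]
    {H : Subgroup (V ≃ₗ[K] V)} (nondeg : ω.Nondegenerate) (hH : H ≤ similitudeGroup ω)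
    (hne : (rootVectors alt H).Nonempty)
    (hirr : ∀ W : Submodule K V, (∀ h ∈ H, ∀ v ∈ W, h v ∈ W) → W = ⊥ ∨ W = ⊤)
    (hprim : IsPrimitiveLinearGroup H) : isometryGroup ω ≤ H := by
  rw [← transvectionGroup_eq_isometryGroup (alt := alt) nondeg, transvectionGroup_le_iff]
  intro v c
  rcases eq_or_ne v 0 with rfl | hv
  · have hone : symplecticTransvection alt 0 c = 1 := by
      ext x
      simp
    exact hone ▸ one_mem H
  · have hroot : v ∈ rootVectors alt H :=
      (isRootSet_rootVectors hH hirr hne).mem_of_isPrimitiveLinearGroup alt nondeg hH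
        (fun _ hh _ => apply_mem_rootVectors_iff hH hh) hprim hv
    exact hroot.2 c

theorem maximal_monodromy_stmt16_general {p : ℕ} [Fact p.Prime] [NeZero (2 : ZMod p)]
    {V : Type*} [AddCommGroup V] [Module (ZMod p) V] [FiniteDimensional (ZMod p) V]
    {ω : BilinForm (ZMod p) V} (alt : ω.IsAlt) (nondeg : ω.Nondegenerate)
    {H : Subgroup (V ≃ₗ[ZMod p] V)} (hH : H ≤ similitudeGroup ω)
    (htransv : ∃ t ∈ H, t ≠ 1 ∧ t ∈ LinearEquiv.transvections (ZMod p) V)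
    (hirr : ∀ W : Submodule (ZMod p) V, (∀ h ∈ H, ∀ v ∈ W, h v ∈ W) → W = ⊥ ∨ W = ⊤)
    (hprim : IsPrimitiveLinearGroup H) : isometryGroup ω ≤ H := by
  obtain ⟨t, ht, hne, htt⟩ := htransv
  obtain ⟨v, hv, c, hc, rfl⟩ := exists_eq_symplecticTransvection (alt := alt) nondeg (hH ht) htt hne
  exact isometryGroup_le_of_rootVectors_nonempty nondeg hH
    ⟨v, hv, symplecticTransvection_mem_of_ne_zero hc ht⟩ hirr hprim

end Symplectic

section Matrices

variable {n R : Type*} [Fintype n] [DecidableEq n] [CommRing R]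

theorem isAlt_toBilin'_of_transpose_eq_neg [NoZeroDivisors R] [NeZero (2 : R)] {A : Matrix n n R}
    (hA : Aᵀ = -A) : (toBilin' A).IsAlt := by
  intro x
  have hneg : toBilin' A x x = -toBilin' A x x := by
    rw [toBilin'_apply']
    nth_rw 1 [dotProduct_mulVec, dotProduct_comm, ← mulVec_transpose, hA, neg_mulVec,
      dotProduct_neg]
  exact (mul_eq_zero_iff_left two_ne_zero).mp (by linear_combination hneg)

/-- The identification of `GL n R` with the linear automorphisms of `n → R`, a matrix acting by
`x ↦ A *ᵥ x`. -/
def mulVecEquiv : GL n R ≃* ((n → R) ≃ₗ[R] (n → R)) :=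
  GeneralLinearGroup.toLin.trans (LinearMap.GeneralLinearGroup.generalLinearEquiv R (n → R))

@[simp]
theorem coe_mulVecEquiv (A : GL n R) :
    (mulVecEquiv A : (n → R) →ₗ[R] (n → R)) = mulVecLin (A : Matrix n n R) :=
  rfl

@[simp]
theorem mulVecEquiv_apply (A : GL n R) (x : n → R) : mulVecEquiv A x = (A : Matrix n n R) *ᵥ x :=
  rfl

theorem det_mulVecEquiv (A : GL n R) :
    LinearEquiv.det (mulVecEquiv A) = GeneralLinearGroup.det A :=
  Units.ext (by simp [← toLin'_apply'])

theorem toBilin'_mulVecEquiv_eq_iff {B : Matrix n n R} {A : GL n R} {m : R} :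
    (∀ x y, toBilin' B (mulVecEquiv A x) (mulVecEquiv A y) = m * toBilin' B x y) ↔
      (A : Matrix n n R)ᵀ * B * A = m • B := by
  rw [← toBilin'.injective.eq_iff, ← toBilin'_comp, map_smul, LinearMap.BilinForm.ext_iff]
  rfl

theorem mulVecEquiv_mem_isometryGroup_iff {B : Matrix n n R} {A : GL n R} :
    mulVecEquiv A ∈ isometryGroup (toBilin' B) ↔ (A : Matrix n n R)ᵀ * B * A = B := by
  have h := toBilin'_mulVecEquiv_eq_iff (B := B) (A := A) (m := 1)
  simp only [one_mul, one_smul] at h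
  exact h

theorem mulVecEquiv_mem_similitudeGroup_iff {B : Matrix n n R} {A : GL n R} :
    mulVecEquiv A ∈ similitudeGroup (toBilin' B) ↔
      ∃ m : Rˣ, (A : Matrix n n R)ᵀ * B * A = (m : R) • B :=
  exists_congr fun _ => toBilin'_mulVecEquiv_eq_iff

end Matrices

section StandardForm

variable {R : Type} [CommRing R] {g : ℕ}

theorem transpose_OmegaMat : (OmegaMat g R)ᵀ = -OmegaMat g R := by
  ext i j
  rw [transpose_apply, neg_apply]
  simp only [OmegaMat, of_apply]
  grind

/-- The indexing of the entries of a block diagonal matrix with `g` blocks of size `2`: the entry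
`k` of the block `i` has index `2 * i + k`. -/
def blockIndexEquiv (g : ℕ) : Fin 2 × Fin g ≃ Fin (2 * g) :=
  (Equiv.prodComm _ _).trans (finProdFinEquiv.trans (finCongr (mul_comm g 2)))

theorem OmegaMat_eq_reindex_blockDiagonal :
    OmegaMat g R = reindex (blockIndexEquiv g) (blockIndexEquiv g)
      (blockDiagonal fun _ => !![0, 1; -1, 0]) := by
  rw [← Equiv.symm_apply_eq]
  ext ⟨k, i⟩ ⟨l, j⟩
  fin_cases k <;> fin_cases l <;>
    simp [OmegaMat, blockIndexEquiv, blockDiagonal_apply, Fin.ext_iff] <;> grind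

theorem det_OmegaMat : (OmegaMat g R).det = 1 := by
  rw [OmegaMat_eq_reindex_blockDiagonal, det_reindex_self, det_blockDiagonal]
  simp

end StandardForm

/-- Let `g ≥ 2` and `ℓ ≥ 3` prime, and let `H ⊆ GSp_{2g}(ℤ/ℓℤ)` be a subgroup such that:
(A) `H` contains a transvection (a nonidentity element of determinant `1` fixing pointwise a
codimension-1 subspace of `(ℤ/ℓℤ)^{2g}`); (B) `H` acts irreducibly on `(ℤ/ℓℤ)^{2g}`; and
(C) `H` acts primitively on `(ℤ/ℓℤ)^{2g}` (there is no direct-sum decomposition into `k ≥ 2`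
nonzero subspaces permuted by `H`). Then `H ⊇ Sp_{2g}(ℤ/ℓℤ)`. -/
theorem maximal_monodromy_stmt16 (g ℓ : ℕ) (hg : 2 ≤ g) (hℓp : ℓ.Prime) (hℓ3 : 3 ≤ ℓ)
    (H : Subgroup (GL (Fin (2*g)) (ZMod ℓ)))
    (hGSp : (H : Set (GL (Fin (2*g)) (ZMod ℓ))) ⊆ GSpSet g (ZMod ℓ))
    (hA : ∃ h ∈ H, h ≠ 1 ∧ (h : Matrix (Fin (2*g)) (Fin (2*g)) (ZMod ℓ)).det = 1 ∧
      ∃ V : Submodule (ZMod ℓ) (Fin (2*g) → ZMod ℓ),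
        Module.finrank (ZMod ℓ) V = 2*g - 1 ∧
        ∀ v ∈ V, (h : Matrix (Fin (2*g)) (Fin (2*g)) (ZMod ℓ)).mulVec v = v)
    (hB : ∀ V : Submodule (ZMod ℓ) (Fin (2*g) → ZMod ℓ),
      (∀ h ∈ H, ∀ v ∈ V, (h : Matrix (Fin (2*g)) (Fin (2*g)) (ZMod ℓ)).mulVec v ∈ V) →
      V = ⊥ ∨ V = ⊤)
    (hC : ¬ ∃ k : ℕ, 2 ≤ k ∧
      ∃ Vs : Fin k → Submodule (ZMod ℓ) (Fin (2*g) → ZMod ℓ),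
        (∀ idx, Vs idx ≠ ⊥) ∧ iSupIndep Vs ∧ (⨆ idx, Vs idx) = ⊤ ∧
        ∀ h ∈ H, ∃ π : Equiv.Perm (Fin k), ∀ idx,
          (Vs idx).map
            (Matrix.mulVecLin (h : Matrix (Fin (2*g)) (Fin (2*g)) (ZMod ℓ))) = Vs (π idx)) :
    ∀ B : GL (Fin (2*g)) (ZMod ℓ), B ∈ SpSet g (ZMod ℓ) → B ∈ H := by
  have : Fact ℓ.Prime := ⟨hℓp⟩
  have : NeZero (2 : ZMod ℓ) := ⟨Ring.two_ne_zero (by rw [ZMod.ringChar_zmod_n]; lia)⟩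
  obtain ⟨t, ht, hne, hdet, W, hW, htW⟩ := hA
  have hH : H.map mulVecEquiv.toMonoidHom ≤ similitudeGroup (toBilin' (OmegaMat g (ZMod ℓ))) := by
    rintro _ ⟨h, hh, rfl⟩
    exact mulVecEquiv_mem_similitudeGroup_iff.mpr (hGSp hh)
  have htransv : mulVecEquiv t ∈ LinearEquiv.transvections (ZMod ℓ) (Fin (2 * g) → ZMod ℓ) := by
    refine mem_transvections_of_det_eq_one (W := W) ?_ (by simp [hW]; lia) htW
    exact (det_mulVecEquiv t).trans (Units.ext hdet)
  have hle := maximal_monodromy_stmt16_general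
    (isAlt_toBilin'_of_transpose_eq_neg transpose_OmegaMat)
    (LinearMap.BilinForm.nondegenerate_toBilin'_of_det_ne_zero' _ (by simp [det_OmegaMat])) hH
    ⟨_, ⟨t, ht, rfl⟩, by simpa using hne, htransv⟩ (by simpa using hB)
    (isPrimitiveLinearGroup_of_not_exists_fin (by simpa using hC))
  exact fun B hBSp => (Subgroup.mem_map_iff_mem mulVecEquiv.injective).mp
    (hle (mulVecEquiv_mem_isometryGroup_iff.mpr hBSp))
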